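/- arXiv:2011.03858 — 4 statements merged into one kernel-verified Lean document; each statement's English description precedes it below -/
import Mathlib

section
/- For all positive integers n and m with n ≥ 2 and m ≤ ⌊(n+1)/2⌋ + 1, lcm(R_m, R_{m+1}, …, R_n) ≥ gcd(R_0, R_1) · ((R_1 + R_0·|β|)/gcd(R_0, R_1))^{(n−1)/2} · α^{n²/4 − n/2 − 7/4}, where α := (P + √Δ)/2 and β := (P − √Δ)/2. -/
/-- The fundamental Lucas sequence for `x² = p x + q`. -/
def lucU (p q : ℕ) : ℕ → ℕ
  | 0 => 0
  | 1 => 1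
  | (n + 2) => p * lucU p q (n + 1) + q * lucU p q n

/-- Lucas factorial. -/
def lucF (p q N : ℕ) : ℕ := ∏ j ∈ Finset.range N, lucU p q (j + 1)

lemma luc_add (p q : ℕ) (S : ℕ → ℕ) (hS : ∀ n, S (n + 2) = p * S (n + 1) + q * S n) (a : ℕ) :
    ∀ b, S (a + 1 + b) = lucU p q (b + 1) * S (a + 1) + q * lucU p q b * S a := by
  intro b
  induction b using Nat.twoStepInduction with
  | zero => simp [lucU]
  | one => simp [lucU, hS]
  | more b h1 h2 =>
    have : S (a + 1 + (b + 2)) = p * S (a + 1 + (b + 1)) + q * S (a + 1 + b) := hS (a + 1 + b)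
    rw [this, h1, h2]
    simp only [lucU]
    ring

lemma lucF_succ (p q N : ℕ) : lucF p q (N + 1) = lucF p q N * lucU p q (N + 1) := by
  simp [lucF, Finset.prod_range_succ]

lemma lucF_dvd (p q : ℕ) : ∀ s a b, a + b = s → lucF p q a * lucF p q b ∣ lucF p q (a + b) := by
  intro s
  induction s with
  | zero =>
    intro a b h
    obtain ⟨rfl, rfl⟩ : a = 0 ∧ b = 0 := by omega
    simp [lucF]
  | succ s ih =>
    intro a b h
    rcases a with _ | a
    · simp [lucF]
    rcases b with _ | b
    · simp [lucF]
    have e : a + 1 + (b + 1) = (a + b + 1) + 1 := by omega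
    have hu : lucU p q (a + b + 1 + 1) = lucU p q (b + 2) * lucU p q (a + 1)
        + q * lucU p q (b + 1) * lucU p q a := by
      rw [← luc_add p q (lucU p q) (fun n => rfl) a (b + 1), ← e]
    have h1 := ih a (b + 1) (by omega)
    have h2 := ih (a + 1) b (by omega)
    rw [e, lucF_succ p q (a + b + 1), hu, mul_add]
    apply dvd_add
    · rw [show a + (b + 1) = a + b + 1 by omega] at h1
      rw [lucF_succ p q a]
      calc _ = (lucF p q a * lucF p q (b + 1)) * lucU p q (a + 1) := by ring
        _ ∣ lucF p q (a + b + 1) * lucU p q (a + 1) := mul_dvd_mul_right h1 _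
        _ ∣ _ := ⟨lucU p q (b + 2), by ring⟩
    · rw [show a + 1 + b = a + b + 1 by omega] at h2
      rw [lucF_succ p q b]
      calc _ = (lucF p q (a + 1) * lucF p q b) * lucU p q (b + 1) := by ring
        _ ∣ lucF p q (a + b + 1) * lucU p q (b + 1) := mul_dvd_mul_right h2 _
        _ ∣ _ := ⟨q * lucU p q a, by ring⟩

lemma luc_cop (p q : ℕ) (S : ℕ → ℕ) (hS : ∀ n, S (n + 2) = p * S (n + 1) + q * S n)
    (hpq : Nat.Coprime p q) (h1q : Nat.Coprime (S 1) q) (h01 : Nat.Coprime (S 0) (S 1)) :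
    ∀ a, Nat.Coprime (S (a + 1)) q ∧ Nat.Coprime (S a) (S (a + 1)) := by
  intro a
  induction a with
  | zero => exact ⟨h1q, h01⟩
  | succ a ih =>
    obtain ⟨h1, h2⟩ := ih
    constructor
    · rw [show a + 1 + 1 = a + 2 by rfl, hS]
      simpa using Nat.Coprime.mul_left hpq h1
    · rw [show a + 1 + 1 = a + 2 by rfl, hS]
      have : Nat.Coprime (S (a + 1)) (q * S a) := Nat.Coprime.mul_right h1 h2.symm
      simpa using this

lemma luc_gcd (p q : ℕ) (S : ℕ → ℕ) (hS : ∀ n, S (n + 2) = p * S (n + 1) + q * S n)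
    (hpq : Nat.Coprime p q) (h1q : Nat.Coprime (S 1) q) (h01 : Nat.Coprime (S 0) (S 1))
    (a b x : ℕ) (hx : x ∣ S (a + 1)) (hy : x ∣ S (a + 1 + b)) : x ∣ lucU p q b := by
  obtain ⟨h1, h2⟩ := luc_cop p q S hS hpq h1q h01 a
  rw [luc_add p q S hS, Nat.dvd_add_right (hx.mul_left _)] at hy
  have c1 : Nat.Coprime x q := Nat.Coprime.coprime_dvd_left hx h1
  have c2 : Nat.Coprime x (S a) := Nat.Coprime.coprime_dvd_left hx h2.symm
  exact c1.dvd_of_dvd_mul_left (c2.dvd_of_dvd_mul_right hy)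

lemma luc_core (p q : ℕ) (S : ℕ → ℕ) (hS : ∀ n, S (n + 2) = p * S (n + 1) + q * S n)
    (hpq : Nat.Coprime p q) (h1q : Nat.Coprime (S 1) q) (h01 : Nat.Coprime (S 0) (S 1))
    (hpos : ∀ n, 0 < S n) (k N L : ℕ) (hL : ∀ j ≤ N, S (k + 1 + j) ∣ L) :
    ∏ j ∈ Finset.range (N + 1), S (k + 1 + j) ∣ L * lucF p q N := by
  rw [Nat.dvd_iff_prime_pow_dvd_dvd]
  intro r e hr he
  set f : ℕ → ℕ := fun j => (S (k + 1 + j)).factorization r with hf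
  have hfd : ∀ j, r ^ f j ∣ S (k + 1 + j) := fun j => Nat.ordProj_dvd _ _
  obtain ⟨i, hi, hmax⟩ := Finset.exists_max_image (Finset.range (N + 1)) f ⟨0, by simp⟩
  have he2 : e ≤ ∑ j ∈ Finset.range (N + 1), f j := by
    have h0 : ∏ j ∈ Finset.range (N + 1), S (k + 1 + j) ≠ 0 :=
      Finset.prod_ne_zero_iff.mpr (fun j _ => (hpos _).ne')
    have := (hr.pow_dvd_iff_le_factorization h0).mp he
    rwa [Nat.factorization_prod (fun j _ => (hpos _).ne'), Finset.sum_apply'] at this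
  refine (pow_dvd_pow r he2).trans ?_
  rw [← Finset.prod_pow_eq_pow_sum]
  have hiN : i ≤ N := by simpa [Nat.lt_succ_iff] using hi
  obtain ⟨M, rfl⟩ := Nat.exists_eq_add_of_le hiN
  rw [show i + M + 1 = (i + 1) + M by ring, Finset.prod_range_add, Finset.prod_range_succ]
  have hA : ∏ j ∈ Finset.range i, r ^ f j ∣ lucF p q i := by
    rw [lucF, ← Finset.prod_range_reflect (fun j => lucU p q (j + 1))]
    apply Finset.prod_dvd_prod_of_dvd
    intro j hj
    have hj : j < i := by simpa using hj
    apply luc_gcd p q S hS hpq h1q h01 (k + j)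
    · rw [show k + j + 1 = k + 1 + j by ring]; exact hfd j
    · rw [show k + j + 1 + (i - 1 - j + 1) = k + 1 + i by omega]
      exact (pow_dvd_pow r (hmax j (by simp; omega))).trans (hfd i)
  have hB : ∏ j ∈ Finset.range M, r ^ f (i + 1 + j) ∣ lucF p q M := by
    rw [lucF]
    apply Finset.prod_dvd_prod_of_dvd
    intro j hj
    have hj : j < M := by simpa using hj
    apply luc_gcd p q S hS hpq h1q h01 (k + i)
    · rw [show k + i + 1 = k + 1 + i by ring]
      exact (pow_dvd_pow r (hmax _ (by simp; omega))).trans (hfd i)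
    · rw [show k + i + 1 + (j + 1) = k + 1 + (i + 1 + j) by omega]
      exact hfd _
  calc _ = r ^ f i * ((∏ j ∈ Finset.range i, r ^ f j) * ∏ j ∈ Finset.range M, r ^ f (i + 1 + j)) := by
        ring
    _ ∣ L * lucF p q (i + M) := mul_dvd_mul ((hfd i).trans (hL i hiN))
        ((mul_dvd_mul hA hB).trans (lucF_dvd p q _ i M rfl))

lemma luc_real (p q : ℕ) (S : ℕ → ℕ) (hS : ∀ n, S (n + 2) = p * S (n + 1) + q * S n)
    (a b : ℝ) (hp : (p : ℝ) = a - b) (hq : (q : ℝ) = a * b) :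
    ∀ i, (S (i + 1) : ℝ) + b * S i = (S 1 + b * S 0) * a ^ i := by
  intro i
  induction i with
  | zero => simp
  | succ i ih =>
    rw [pow_succ, ← mul_assoc, ← ih, show i + 1 + 1 = i + 2 by rfl, hS]
    push_cast
    rw [hp, hq]; ring

lemma luc_main (p q : ℕ) (S : ℕ → ℕ) (hS : ∀ n, S (n + 2) = p * S (n + 1) + q * S n)
    (hpq : Nat.Coprime p q) (h1q : Nat.Coprime (S 1) q) (h01 : Nat.Coprime (S 0) (S 1))
    (hpos : ∀ n, 0 < S n) (t N L : ℕ) (hL : ∀ j ≤ N, S (t + 2 + j) ∣ L) (hL0 : 0 < L)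
    (a b : ℝ) (hp : (p : ℝ) = a - b) (hq : (q : ℝ) = a * b) (hp1 : 1 ≤ p) (hb : 0 < b) :
    (S 1 + b * S 0) ^ (N + 1) * a ^ (t * (N + 1) + N) ≤ (L : ℝ) := by
  have hp1' : (1 : ℝ) ≤ p := by exact_mod_cast hp1
  have ha : 1 < a := by linarith
  have hc : 0 < (S 1 + b * S 0 : ℝ) := by
    have := hpos 1
    positivity
  set c : ℝ := S 1 + b * S 0 with hcdef
  have hU0 : ∀ n, 0 < lucU p q (n + 1) := by
    intro n
    induction n with
    | zero => simp [lucU]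
    | succ n ih => simp only [lucU]; positivity
  have hU : ∀ i, (lucU p q (i + 1) : ℝ) ≤ a ^ i := by
    intro i
    have := luc_real p q (lucU p q) (fun n => rfl) a b hp hq i
    simp only [lucU, Nat.cast_one, Nat.cast_zero, mul_zero, add_zero, one_mul] at this
    have h2 : 0 ≤ b * (lucU p q i : ℝ) := by positivity
    linarith
  have hlow : ∀ i, c * a ^ i ≤ S (i + 2) := by
    intro i
    have h := luc_real p q S hS a b hp hq (i + 1)
    rw [← hcdef, pow_succ, show i + 1 + 1 = i + 2 by rfl] at h
    have h3 : (S (i + 1) : ℝ) ≤ S (i + 2) := by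
      have : S (i + 1) ≤ S (i + 2) := by rw [hS]; nlinarith [Nat.zero_le (q * S i)]
      exact_mod_cast this
    have h4 : (0 : ℝ) ≤ S (i + 2) := by positivity
    have h5 : (c * a ^ i) * a ≤ S (i + 2) * a := by nlinarith
    exact le_of_mul_le_mul_right h5 (by linarith)
  have hdvd := luc_core p q S hS hpq h1q h01 hpos (t + 1) N L hL
  have hF0 : 0 < lucF p q N := Finset.prod_pos (fun j _ => hU0 j)
  have hle := Nat.le_of_dvd (Nat.mul_pos hL0 hF0) hdvd
  have hle' : (∏ j ∈ Finset.range (N + 1), (S (t + 2 + j) : ℝ)) ≤ L * lucF p q N := by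
    exact_mod_cast hle
  have hF : (lucF p q N : ℝ) ≤ ∏ j ∈ Finset.range N, a ^ j := by
    rw [lucF]; push_cast
    exact Finset.prod_le_prod (fun j _ => by positivity) (fun j _ => hU j)
  have hlo : ∏ j ∈ Finset.range (N + 1), c * a ^ (t + j) ≤
      ∏ j ∈ Finset.range (N + 1), (S (t + 2 + j) : ℝ) := by
    refine Finset.prod_le_prod (fun j _ => by positivity) (fun j _ => ?_)
    rw [show t + 2 + j = t + j + 2 by ring]
    exact hlow _
  have hprod : ∏ j ∈ Finset.range (N + 1), c * a ^ (t + j) =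
      c ^ (N + 1) * a ^ (t * (N + 1) + N) * ∏ j ∈ Finset.range N, a ^ j := by
    simp_rw [pow_add a t, Finset.prod_mul_distrib]
    rw [Finset.prod_range_succ (fun j => a ^ j)]
    simp only [Finset.prod_const, Finset.card_range]
    rw [pow_add a, pow_mul]; ring
  have hPpos : 0 < ∏ j ∈ Finset.range N, a ^ j := Finset.prod_pos (fun j _ => by positivity)
  refine le_of_mul_le_mul_right ?_ hPpos
  calc _ = ∏ j ∈ Finset.range (N + 1), c * a ^ (t + j) := hprod.symm
    _ ≤ L * lucF p q N := hlo.trans hle'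
    _ ≤ L * ∏ j ∈ Finset.range N, a ^ j := by gcongr


/-- Lower bound for `lcm(R_m, …, R_n)` when `P > 0`, `Q < 0`,
`R_0, R_1 ≥ 1`, `n ≥ 2` and `m ≤ ⌊(n+1)/2⌋ + 1`, where `α = (P + √Δ)/2` and
`β = (P − √Δ)/2`. -/
theorem lcm_binary_recurrence_lower_bound
    (P Q R0 R1 : ℤ) (R : ℕ → ℤ)
    (hP : 0 < P) (hQ : Q < 0) (hR0pos : 1 ≤ R0) (hR1pos : 1 ≤ R1)
    (hcopPQ : Int.gcd P Q = 1) (hcopR1Q : Int.gcd R1 Q = 1)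
    (hR0 : R 0 = R0) (hR1 : R 1 = R1)
    (hRrec : ∀ n : ℕ, R (n + 2) = P * R (n + 1) - Q * R n)
    (α β : ℝ)
    (hα : α = ((P : ℝ) + Real.sqrt ((P : ℝ) ^ 2 - 4 * (Q : ℝ))) / 2)
    (hβ : β = ((P : ℝ) - Real.sqrt ((P : ℝ) ^ 2 - 4 * (Q : ℝ))) / 2)
    (n m : ℕ) (hm : 1 ≤ m) (hn : 2 ≤ n) (hmn : m ≤ (n + 1) / 2 + 1) :
    ((((Finset.Icc m n).lcm R : ℤ)) : ℝ) ≥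
      (Int.gcd R0 R1 : ℝ) *
        (((R1 : ℝ) + (R0 : ℝ) * |β|) / (Int.gcd R0 R1 : ℝ)) ^ (((n : ℝ) - 1) / 2) *
        α ^ ((n : ℝ) ^ 2 / 4 - (n : ℝ) / 2 - 7 / 4) := by
  set Δ : ℝ := (P : ℝ) ^ 2 - 4 * (Q : ℝ) with hΔ
  have hQr : (Q : ℝ) < 0 := by exact_mod_cast hQ
  have hPr : (0 : ℝ) < P := by exact_mod_cast hP
  have hΔpos : 0 ≤ Δ := by nlinarith [sq_nonneg (P : ℝ)]
  have hsq : Real.sqrt Δ * Real.sqrt Δ = Δ := Real.mul_self_sqrt hΔpos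
  have hβneg : β < 0 := by
    have : (P : ℝ) < Real.sqrt Δ := by
      apply Real.lt_sqrt_of_sq_lt
      rw [hΔ]; linarith
    rw [hβ]; linarith
  have habs : |β| = -β := abs_of_neg hβneg
  have hsum : (P : ℝ) = α - |β| := by rw [habs, hα, hβ]; ring
  have hprod : -(Q : ℝ) = α * |β| := by
    rw [habs, hα, hβ]
    have : Real.sqrt Δ * Real.sqrt Δ = (P : ℝ) ^ 2 - 4 * (Q : ℝ) := by rw [hsq]
    linear_combination (-1 / 4) * this
  have hb : 0 < |β| := abs_pos.mpr hβneg.ne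
  clear_value Δ
  -- positivity and divisibility
  set d : ℕ := Int.gcd R0 R1 with hd
  have hd0 : 0 < d := Int.gcd_pos_of_ne_zero_left _ (by omega)
  have hRpos : ∀ i, 0 < R i := by
    intro i
    induction i using Nat.twoStepInduction with
    | zero => rw [hR0]; omega
    | one => rw [hR1]; omega
    | more i h1 h2 => rw [hRrec]; nlinarith
  have hdR : ∀ i, (d : ℤ) ∣ R i := by
    intro i
    induction i using Nat.twoStepInduction with
    | zero => rw [hR0]; exact Int.gcd_dvd_left _ _
    | one => rw [hR1]; exact Int.gcd_dvd_right _ _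
    | more i h1 h2 => rw [hRrec]; exact dvd_sub (h2.mul_left _) (h1.mul_left _)
  have hex : ∀ i, ∃ s : ℕ, R i = d * s := by
    intro i
    obtain ⟨s, hs⟩ := hdR i
    have : 0 < s := by
      have h1 := hRpos i
      rw [hs] at h1
      exact pos_of_mul_pos_right h1 (by positivity)
    exact ⟨s.toNat, by rw [hs, Int.toNat_of_nonneg this.le]⟩
  choose S hSR using hex
  have hdz : (0 : ℤ) < d := by exact_mod_cast hd0
  have hSpos : ∀ i, 0 < S i := by
    intro i
    have h1 := hRpos i
    rw [hSR] at h1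
    exact_mod_cast pos_of_mul_pos_right h1 hdz.le
  obtain ⟨p, rfl⟩ := Int.eq_ofNat_of_zero_le hP.le
  obtain ⟨q, hq⟩ := Int.eq_ofNat_of_zero_le (show 0 ≤ -Q by omega)
  obtain rfl : Q = -(q : ℤ) := by omega
  have hSrec : ∀ i, S (i + 2) = p * S (i + 1) + q * S i := by
    intro i
    have h := hRrec i
    rw [hSR, hSR, hSR] at h
    have : (d : ℤ) * S (i + 2) = d * (p * S (i + 1) + q * S i) := by rw [h]; ring
    exact_mod_cast mul_left_cancel₀ hdz.ne' this
  have hpq : Nat.Coprime p q := by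
    rw [Int.gcd_neg] at hcopPQ
    exact hcopPQ
  have e0 : R0 = ((d * S 0 : ℕ) : ℤ) := by rw [← hR0, hSR]; push_cast; rfl
  have e1 : R1 = ((d * S 1 : ℕ) : ℤ) := by rw [← hR1, hSR]; push_cast; rfl
  have h1q : Nat.Coprime (S 1) q := by
    rw [Int.gcd_neg, e1, Int.gcd_natCast_natCast] at hcopR1Q
    exact Nat.Coprime.coprime_mul_left hcopR1Q
  have h01 : Nat.Coprime (S 0) (S 1) := by
    have h : d = d * Nat.gcd (S 0) (S 1) := by
      rw [← Nat.gcd_mul_left, ← Int.gcd_natCast_natCast, ← e0, ← e1]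
    exact Nat.eq_of_mul_eq_mul_left hd0 (by rw [← h, mul_one])
  -- the lcm
  have hl0 : (Finset.Icc m n).lcm R ≠ 0 := by
    rw [Ne, Finset.lcm_eq_zero_iff]
    rintro ⟨i, _, hi⟩
    exact (hRpos i).ne' hi
  have hlnn : 0 ≤ (Finset.Icc m n).lcm R := by
    rw [← Finset.normalize_lcm, ← Int.abs_eq_normalize]; exact abs_nonneg _
  obtain ⟨t, ht⟩ : ∃ t, (n + 1) / 2 + 1 = t + 2 := ⟨(n + 1) / 2 - 1, by omega⟩
  obtain ⟨N, hN⟩ : ∃ N, n = t + 2 + N := ⟨n - (t + 2), by omega⟩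
  have hdl : ∀ i, m ≤ i → i ≤ n → R i ∣ (Finset.Icc m n).lcm R := fun i h1 h2 =>
    Finset.dvd_lcm (Finset.mem_Icc.mpr ⟨h1, h2⟩)
  set l := (Finset.Icc m n).lcm R with hl
  clear_value l
  obtain ⟨L', hL'⟩ : (d : ℤ) ∣ l := (hdR n).trans (hdl n (by omega) le_rfl)
  have hL'pos : 0 < L' := by
    have : 0 < (d : ℤ) * L' := by rw [← hL']; omega
    exact pos_of_mul_pos_right this hdz.le
  obtain ⟨L, rfl⟩ := Int.eq_ofNat_of_zero_le hL'pos.le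
  have hLpos : 0 < L := by exact_mod_cast hL'pos
  have hLd : ∀ j ≤ N, S (t + 2 + j) ∣ L := by
    intro j hj
    have h := hdl (t + 2 + j) (by omega) (by omega)
    rw [hSR, hL'] at h
    exact_mod_cast Int.dvd_of_mul_dvd_mul_left hdz.ne' h
  have key := luc_main p q S hSrec hpq h1q h01 hSpos t N L hLd hLpos α |β|
    (by exact_mod_cast hsum) (by rw [← hprod]; push_cast; ring) (by omega) hb
  have hdr : (0 : ℝ) < d := by exact_mod_cast hd0
  have hceq : ((R1 : ℝ) + (R0 : ℝ) * |β|) / (d : ℝ) = S 1 + |β| * S 0 := by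
    rw [e0, e1]; push_cast; field_simp
  rw [hceq, hL']
  set c : ℝ := S 1 + |β| * S 0 with hc
  have hc1 : 1 ≤ c := by
    have h1 : (1 : ℝ) ≤ S 1 := by exact_mod_cast hSpos 1
    have h2 : 0 ≤ |β| * (S 0 : ℝ) := by positivity
    linarith
  have hα1 : 1 ≤ α := by
    have : (1 : ℝ) ≤ ((p : ℤ) : ℝ) := by exact_mod_cast hP
    linarith
  push_cast
  rw [ge_iff_le, mul_assoc]
  refine mul_le_mul_of_nonneg_left (le_trans ?_ key) hdr.le
  have hpar : n = 2 * t + 2 ∨ n = 2 * t + 1 := by omega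
  rw [← Real.rpow_natCast c, ← Real.rpow_natCast α]
  have x1 : ((n : ℝ) - 1) / 2 ≤ ((N + 1 : ℕ) : ℝ) := by
    have : n ≤ 2 * N + 3 := by omega
    have : (n : ℝ) ≤ 2 * N + 3 := by exact_mod_cast this
    push_cast; linarith
  have x2 : (n : ℝ) ^ 2 / 4 - (n : ℝ) / 2 - 7 / 4 ≤ ((t * (N + 1) + N : ℕ) : ℝ) := by
    rcases hpar with h | h
    · obtain rfl : N = t := by omega
      rw [h]; push_cast; nlinarith
    · obtain ⟨rfl⟩ : t = N + 1 := by omega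
      rw [h]; push_cast; nlinarith
  gcongr
end

section
/- Let q ≥ 2 be a fixed integer and u_0, r positive integers with gcd(u_0 + r, q) = 1. Define u_n := u_0 + r·(q^n − 1)/(q − 1) for all n ≥ 1. Then for all positive integers n and m with m ≤ ⌊n/2⌋, lcm(u_m, u_{m+1}, …, u_n) ≥ gcd(u_0, r) · (r/gcd(u_0, r))^{n/2 + 1} · q^{n(n−2)/4}. -/
/-- The `q`-analogue of `k`. -/
def qnum (q k : ℕ) : ℕ := ∑ i ∈ Finset.range k, q ^ i

lemma qnum_add (q k j : ℕ) : qnum q (k + j) = qnum q k + q ^ k * qnum q j := by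
  unfold qnum
  rw [Finset.sum_range_add, Finset.mul_sum]
  simp [pow_add]

lemma qnum_pos (q k : ℕ) (hk : 1 ≤ k) : 0 < qnum q k := by
  obtain ⟨j, rfl⟩ := Nat.exists_eq_add_of_le hk
  rw [qnum_add]
  simp [qnum]

/-- Divisibility of a multiple of the lcm by the product of consecutive terms. -/
lemma prod_dvd_lcm (q a b : ℕ) (hab : Nat.Coprime a b) (hq : Nat.Coprime (a + b) q) (L : ℕ) :
    ∀ (N k : ℕ), 1 ≤ k → (∀ i ≤ N, a + b * qnum q (k + i) ∣ L) →
      (∏ i ∈ Finset.range (N + 1), (a + b * qnum q (k + i))) ∣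
        L * ∏ j ∈ Finset.range N, qnum q (j + 1) := by
  have hcop : ∀ k, 1 ≤ k → Nat.Coprime (a + b * qnum q k) (b * q ^ (k : ℕ)) := by
    intro k hk
    apply Nat.Coprime.mul_right
    · simpa using hab
    · apply Nat.Coprime.pow_right
      obtain ⟨j, rfl⟩ := Nat.exists_eq_add_of_le hk
      rw [qnum_add]
      have : a + b * (qnum q 1 + q ^ 1 * qnum q j) = (a + b) + q * (b * qnum q j) := by
        simp [qnum]; ring
      rw [this]
      simpa using hq
  have hcop2 : ∀ k i, 1 ≤ k → Nat.Coprime (a + b * qnum q (k + i)) (b * q ^ k) := by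
    intro k i hk
    apply (hcop (k + i) (by omega)).coprime_dvd_right
    rw [pow_add, ← mul_assoc]
    exact Dvd.intro _ rfl
  intro N
  induction N with
  | zero =>
    intro k hk h
    simpa using h 0 le_rfl
  | succ N ih =>
    intro k hk h
    have h1 := ih k hk (fun i hi => h i (by omega))
    have h2 := ih (k + 1) (by omega) (fun i hi => by
      have := h (i + 1) (by omega)
      rwa [show k + (i + 1) = k + 1 + i by ring] at this)
    set F := L * ∏ j ∈ Finset.range N, qnum q (j + 1) with hF
    set T := ∏ i ∈ Finset.range (N + 1 + 1), (a + b * qnum q (k + i)) with hT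
    have d1 : T ∣ F * (a + b * qnum q (k + (N + 1))) := by
      rw [hT, Finset.prod_range_succ]
      exact Nat.mul_dvd_mul_right h1 _
    have d2 : T ∣ F * (a + b * qnum q k) := by
      rw [hT, Finset.prod_range_succ']
      apply mul_dvd_mul _ (by simp)
      refine (dvd_of_eq (Finset.prod_congr rfl fun i _ => ?_)).trans h2
      rw [show k + (i + 1) = k + 1 + i by ring]
    have e : F * (a + b * qnum q (k + (N + 1))) =
        F * (a + b * qnum q k) + (F * qnum q (N + 1)) * (b * q ^ k) := by
      rw [qnum_add]; ring
    rw [e, Nat.dvd_add_right d2] at d1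
    have c : Nat.Coprime T (b * q ^ k) :=
      Nat.Coprime.prod_left (fun i _ => hcop2 k i hk)
    have := c.dvd_of_dvd_mul_right d1
    rwa [hF, mul_assoc, ← Finset.prod_range_succ] at this

lemma lcm_nat_bound (q a b : ℕ) (hq2 : 2 ≤ q) (hab : Nat.Coprime a b)
    (hq : Nat.Coprime (a + b) q) (L : ℕ) (hL : 0 < L) (N k : ℕ) (hk : 1 ≤ k)
    (h : ∀ i ≤ N, a + b * qnum q (k + i) ∣ L) :
    b ^ (N + 1) * q ^ (k * N) ≤ L := by
  have hd := prod_dvd_lcm q a b hab hq L N k hk h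
  have hG : 0 < ∏ j ∈ Finset.range N, qnum q (j + 1) :=
    Finset.prod_pos (fun j _ => qnum_pos q _ (by omega))
  have hle := Nat.le_of_dvd (Nat.mul_pos hL hG) hd
  have hlow : b ^ (N + 1) * q ^ (k * N) * ∏ j ∈ Finset.range N, qnum q (j + 1) ≤
      ∏ i ∈ Finset.range (N + 1), (a + b * qnum q (k + i)) := by
    rw [Finset.prod_range_succ']
    have h1 : ∏ j ∈ Finset.range N, (b * q ^ k * qnum q (j + 1)) ≤
        ∏ i ∈ Finset.range N, (a + b * qnum q (k + (i + 1))) := by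
      apply Finset.prod_le_prod'
      intro i _
      rw [qnum_add q k (i + 1)]
      nlinarith [Nat.zero_le (b * qnum q k)]
    have h2 : b ≤ a + b * qnum q (k + 0) := by
      have := qnum_pos q (k + 0) (by omega)
      nlinarith
    rw [Finset.prod_mul_distrib, Finset.prod_const, Finset.card_range, mul_pow, ← pow_mul] at h1
    calc _ = (b ^ N * q ^ (k * N) * ∏ j ∈ Finset.range N, qnum q (j + 1)) * b := by ring
      _ ≤ _ := Nat.mul_le_mul h1 h2
  exact Nat.le_of_mul_le_mul_right (hlow.trans hle) hG

/-- Lower bound for the lcm of a `q`-arithmetic progression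
`u_n = u_0 + r·[n]_q` (with `[n]_q = (qⁿ − 1)/(q − 1)`), for `m ≤ ⌊n/2⌋`. -/
theorem lcm_q_arithmetic_lower_bound
    (q u0 r : ℕ) (hq : 2 ≤ q) (hu0 : 0 < u0) (hr : 0 < r)
    (hcop : Nat.gcd (u0 + r) q = 1)
    (u : ℕ → ℕ) (hu : ∀ n : ℕ, 1 ≤ n → u n = u0 + r * ((q ^ n - 1) / (q - 1)))
    (n m : ℕ) (hm : 1 ≤ m) (hn : 1 ≤ n) (hmn : m ≤ n / 2) :
    ((((Finset.Icc m n).lcm u : ℕ)) : ℝ) ≥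
      (Nat.gcd u0 r : ℝ) * ((r : ℝ) / (Nat.gcd u0 r : ℝ)) ^ ((n : ℝ) / 2 + 1) *
        (q : ℝ) ^ ((n : ℝ) * ((n : ℝ) - 2) / 4) := by
  have hd : 0 < Nat.gcd u0 r := Nat.gcd_pos_of_pos_left _ hu0
  obtain ⟨a, b, hab, ha, hb⟩ := Nat.exists_coprime u0 r
  generalize Nat.gcd u0 r = d at *
  subst ha hb
  have hb0 : 0 < b := Nat.pos_of_mul_pos_right hr
  have hu' : ∀ i, 1 ≤ i → u i = d * (a + b * qnum q i) := by
    intro i hi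
    rw [hu i hi, ← Nat.geomSum_eq hq]
    unfold qnum; ring
  have hcq : Nat.Coprime (a + b) q := by
    apply Nat.Coprime.coprime_dvd_left (Dvd.intro d (add_mul a b d)) hcop
  set M := (Finset.Icc m n).lcm u with hM
  have hdu : ∀ i ∈ Finset.Icc m n, u i ∣ M := fun i hi => Finset.dvd_lcm hi
  have hM0 : 0 < M := by
    apply Nat.pos_of_ne_zero
    rw [hM, Ne, Finset.lcm_eq_zero_iff]
    rintro ⟨i, hi, h0⟩
    have hi' := Finset.mem_Icc.1 hi
    rw [hu i (by omega)] at h0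
    omega
  obtain ⟨L, hL⟩ : d ∣ M := by
    refine dvd_trans ?_ (hdu n (Finset.mem_Icc.2 ⟨by omega, le_rfl⟩))
    rw [hu' n hn]
    exact Dvd.intro _ rfl
  have hL0 : 0 < L := by
    apply Nat.pos_of_ne_zero
    rintro rfl
    omega
  have key := lcm_nat_bound q a b hq hab hcq L hL0 (n - n / 2) (n / 2) (by omega) (by
    intro i hi
    have := hdu (n / 2 + i) (Finset.mem_Icc.2 ⟨by omega, by omega⟩)
    rw [hu' _ (by omega), hL] at this
    exact Nat.dvd_of_mul_dvd_mul_left hd this)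
  have hdR : (0 : ℝ) < d := by exact_mod_cast hd
  have hbR : (1 : ℝ) ≤ b := by exact_mod_cast hb0
  have hqR : (1 : ℝ) ≤ q := by exact_mod_cast (by omega : 1 ≤ q)
  have e : ((b * d : ℕ) : ℝ) / d = b := by
    push_cast; field_simp
  rw [e, hL, ge_iff_le, Nat.cast_mul, mul_assoc]
  apply mul_le_mul_of_nonneg_left _ hdR.le
  have keyR : (b : ℝ) ^ (n - n / 2 + 1) * (q : ℝ) ^ (n / 2 * (n - n / 2)) ≤ L := by
    exact_mod_cast key
  refine le_trans ?_ keyR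
  obtain ⟨k, N, hk, hN, hs, h1, h2⟩ : ∃ k N, n / 2 = k ∧ n - n / 2 = N ∧ n = k + N ∧ k ≤ N ∧
      N ≤ k + 1 := ⟨_, _, rfl, rfl, by omega, by omega, by omega⟩
  rw [hN, hk, hs]
  have h1R : (k : ℝ) ≤ N := by exact_mod_cast h1
  have h2R : (N : ℝ) ≤ k + 1 := by exact_mod_cast h2
  have hk1 : (1 : ℝ) ≤ k := by exact_mod_cast (by omega : 1 ≤ k)
  rw [← Real.rpow_natCast (b : ℝ), ← Real.rpow_natCast (q : ℝ)]
  apply mul_le_mul _ _ (by positivity) (by positivity)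
  · apply Real.rpow_le_rpow_of_exponent_le hbR
    push_cast; linarith
  · apply Real.rpow_le_rpow_of_exponent_le hqR
    push_cast; nlinarith
end

section
/- Let m be a fixed positive integer. Then log lcm(F_n, F_{n+1}, …, F_{n+m}) ∼ n·(m+1)·log Φ as n → ∞; that is, lim_{n→∞} log lcm(F_n, F_{n+1}, …, F_{n+m}) / (n·(m+1)·log Φ) = 1. -/
open Real in
theorem log_fib_bound (n : ℕ) (hn : 1 ≤ n) :
    |Real.log (Nat.fib n) - n * Real.log goldenRatio| ≤ 2 * Real.log goldenRatio := by
  obtain ⟨k, rfl⟩ : ∃ k, n = k + 1 := ⟨n - 1, by omega⟩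
  have hφ := goldenRatio_pos
  have h1 := one_lt_goldenRatio
  have hl : 0 < Real.log goldenRatio := Real.log_pos h1
  have h := goldenRatio_mul_fib_succ_add_fib k
  have hF : (0 : ℝ) < Nat.fib (k + 1) := by exact_mod_cast Nat.fib_pos.2 (by omega)
  have hF0 : (0 : ℝ) ≤ Nat.fib k := by positivity
  have hle : (Nat.fib k : ℝ) ≤ Nat.fib (k + 1) := by exact_mod_cast Nat.fib_le_fib_succ
  have hsq := goldenRatio_sq
  have hup : (Nat.fib (k + 1) : ℝ) ≤ goldenRatio ^ (k + 1) := by nlinarith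
  have hlo : goldenRatio ^ (k + 1) ≤ goldenRatio ^ 2 * Nat.fib (k + 1) := by nlinarith
  have a := Real.log_le_log hF hup
  have b := Real.log_le_log (by positivity) hlo
  rw [Real.log_mul (by positivity) hF.ne', Real.log_pow, Real.log_pow] at b
  rw [Real.log_pow] at a
  rw [abs_le]
  push_cast at *
  constructor <;> linarith

theorem gcd_lcm_dvd_prod (s : Finset ℕ) (f : ℕ → ℕ) (c : ℕ) :
    Nat.gcd (s.lcm f) c ∣ ∏ i ∈ s, Nat.gcd (f i) c := by
  induction s using Finset.induction_on with
  | empty => simp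
  | insert a s ha ih =>
    rw [Finset.lcm_insert, Finset.prod_insert ha]
    have h1 : Nat.gcd (GCDMonoid.lcm (f a) (s.lcm f)) c ∣ Nat.gcd (f a * s.lcm f) c :=
      Nat.gcd_dvd_gcd_of_dvd_left _ (lcm_dvd (dvd_mul_right _ _) (dvd_mul_left _ _))
    refine h1.trans ?_
    have h2 : Nat.gcd (f a * s.lcm f) c ∣ Nat.gcd (f a) c * Nat.gcd (s.lcm f) c := by
      rw [Nat.gcd_comm _ c, Nat.gcd_comm _ c, Nat.gcd_comm _ c]
      exact Nat.gcd_mul_right_dvd_mul_gcd _ _ _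
    exact h2.trans (Nat.mul_dvd_mul_left _ ih)

theorem gcd_fib_le (i j M : ℕ) (hij : i < j) (hM : j ≤ i + M) :
    Nat.gcd (Nat.fib i) (Nat.fib j) ≤ Nat.fib M := by
  rw [← Nat.fib_gcd]
  apply Nat.fib_mono
  have : Nat.gcd i j ∣ j - i := Nat.dvd_sub (Nat.gcd_dvd_right _ _) (Nat.gcd_dvd_left _ _)
  have := Nat.le_of_dvd (by omega) this
  omega

theorem log_lcm_fib_bound (m : ℕ) : ∃ C : ℝ, ∀ n : ℕ, 1 ≤ n →
    |Real.log (((Finset.Icc n (n + m)).lcm Nat.fib : ℕ) : ℝ) -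
      n * ((m : ℝ) + 1) * Real.log Real.goldenRatio| ≤ C := by
  induction m with
  | zero =>
    refine ⟨2 * Real.log Real.goldenRatio, fun n hn => ?_⟩
    simpa using log_fib_bound n hn
  | succ m ih =>
    obtain ⟨C, hC⟩ := ih
    have hl : 0 < Real.log Real.goldenRatio := Real.log_pos Real.one_lt_goldenRatio
    refine ⟨C + (m + 1) * Real.log Real.goldenRatio + 2 * Real.log Real.goldenRatio
      + (m + 1) * Real.log (Nat.fib (m + 1)), fun n hn => ?_⟩
    have hI := hC n hn
    have hf := log_fib_bound (n + m + 1) (by omega)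
    set L := (Finset.Icc n (n + m)).lcm Nat.fib with hL
    set F := Nat.fib (n + m + 1) with hF
    have hFpos : 0 < F := Nat.fib_pos.2 (by omega)
    have hLpos : 0 < L := by
      apply Nat.pos_of_ne_zero
      rw [hL, Ne, Finset.lcm_eq_zero_iff]
      simp only [Set.mem_image, Finset.mem_coe, Finset.mem_Icc, not_exists, not_and]
      intro x hx h0
      rw [Nat.fib_eq_zero] at h0
      omega
    have hstep : (Finset.Icc n (n + (m + 1))).lcm Nat.fib = Nat.lcm L F := by
      have : Finset.Icc n (n + (m + 1)) = insert (n + m + 1) (Finset.Icc n (n + m)) := by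
        ext x; simp only [Finset.mem_insert, Finset.mem_Icc]; omega
      rw [this, Finset.lcm_insert, Nat.lcm_comm]
      rfl
    have hg : Nat.gcd L F ≤ Nat.fib (m + 1) ^ (m + 1) := by
      have h1 := Nat.le_of_dvd (Finset.prod_pos fun i _ => Nat.gcd_pos_of_pos_right _ hFpos)
        (gcd_lcm_dvd_prod (Finset.Icc n (n + m)) Nat.fib F)
      refine h1.trans ((Finset.prod_le_pow_card _ _ (Nat.fib (m + 1)) ?_).trans ?_)
      · intro i hi
        rw [Finset.mem_Icc] at hi
        exact gcd_fib_le _ _ _ (by omega) (by omega)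
      · rw [Nat.card_Icc]
        apply le_of_eq
        congr 1
        omega
    have hgpos : 0 < Nat.gcd L F := Nat.gcd_pos_of_pos_right _ hFpos
    have hlpos : 0 < Nat.lcm L F := Nat.lcm_pos hLpos hFpos
    have hmul : ((Nat.gcd L F : ℕ) : ℝ) * (Nat.lcm L F : ℕ) = L * F := by
      exact_mod_cast Nat.gcd_mul_lcm L F
    have hlog := congrArg Real.log hmul
    rw [Real.log_mul (by positivity) (by positivity),
      Real.log_mul (by positivity) (by positivity)] at hlog
    have hg0 : 0 ≤ Real.log (Nat.gcd L F : ℕ) := Real.log_natCast_nonneg _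
    have hg1 : Real.log (Nat.gcd L F : ℕ) ≤ (m + 1) * Real.log (Nat.fib (m + 1)) := by
      have := Real.log_le_log (by positivity) (Nat.cast_le (α := ℝ).2 hg)
      rw [Nat.cast_pow, Real.log_pow] at this
      exact_mod_cast this
    rw [hstep]
    rw [abs_le] at *
    push_cast at *
    have : 0 ≤ (m + 1) * Real.log Real.goldenRatio := by positivity
    constructor <;> linarith [hI.1, hI.2, hf.1, hf.2]

/-- For a fixed positive integer `m`,
`log lcm(F_n, …, F_{n+m}) ∼ n(m+1)log Φ` as `n → ∞`, where `Φ = (1+√5)/2`. -/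
theorem log_lcm_fibonacci_asymptotic
    (Φ : ℝ) (hΦ : Φ = (1 + Real.sqrt 5) / 2)
    (m : ℕ) (hm : 1 ≤ m) :
    Filter.Tendsto
      (fun n : ℕ =>
        Real.log (((Finset.Icc n (n + m)).lcm Nat.fib : ℕ) : ℝ) /
          ((n : ℝ) * ((m : ℝ) + 1) * Real.log Φ))
      Filter.atTop (nhds 1) := by
  have hΦ' : Φ = Real.goldenRatio := hΦ
  rw [hΦ']
  obtain ⟨C, hC⟩ := log_lcm_fib_bound m
  have hl : 0 < Real.log Real.goldenRatio := Real.log_pos Real.one_lt_goldenRatio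
  rw [tendsto_iff_norm_sub_tendsto_zero]
  have hlim : Filter.Tendsto (fun n : ℕ => C / ((m + 1) * Real.log Real.goldenRatio) / (n : ℝ))
      Filter.atTop (nhds 0) := tendsto_const_div_atTop_nhds_zero_nat _
  refine squeeze_zero' (Filter.Eventually.of_forall fun _ => norm_nonneg _) ?_ hlim
  filter_upwards [Filter.eventually_ge_atTop 1] with n hn
  have hn' : (0 : ℝ) < n := by exact_mod_cast hn
  have hD : 0 < (n : ℝ) * ((m : ℝ) + 1) * Real.log Real.goldenRatio := by positivity
  rw [Real.norm_eq_abs, div_sub_one hD.ne', abs_div, abs_of_pos hD, div_div]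
  rw [show ((m : ℝ) + 1) * Real.log Real.goldenRatio * n =
    (n : ℝ) * ((m : ℝ) + 1) * Real.log Real.goldenRatio by ring]
  exact div_le_div_of_nonneg_right (hC n hn) hD.le
end

section
/- For any positive integer n, lcm(U_1, U_2, …, U_n) = lcm(U_n, U_{n−1}, …, U_{n−⌈n/2⌉+1}). -/
/-- For any positive integer `n`,
`lcm(U_1, U_2, …, U_n) = lcm(U_n, U_{n−1}, …, U_{n−⌈n/2⌉+1})`
(here `⌈n/2⌉ = (n+1)/2` in natural-number arithmetic). -/
theorem lcm_lucas_upper_half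
    (P Q : ℤ) (U : ℕ → ℤ)
    (hPQ : P * Q ≠ 0) (hΔ : P ^ 2 - 4 * Q ≠ 0) (hcopPQ : Int.gcd P Q = 1)
    (α β : ℂ) (hsum : α + β = (P : ℂ)) (hprod : α * β = (Q : ℂ))
    (hru : ∀ j : ℕ, 0 < j → (α / β) ^ j ≠ 1)
    (hU0 : U 0 = 0) (hU1 : U 1 = 1)
    (hUrec : ∀ n : ℕ, U (n + 2) = P * U (n + 1) - Q * U n)
    (n : ℕ) (hn : 1 ≤ n) :
    (Finset.Icc 1 n).lcm U = (Finset.Icc (n - (n + 1) / 2 + 1) n).lcm U := by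
  have hadd : ∀ m k : ℕ, U (m + k + 1) = U (m + 1) * U (k + 1) - Q * U m * U k := by
    intro m k
    induction k using Nat.twoStepInduction with
    | zero => simp [hU0, hU1]
    | one =>
      have h2 : U 2 = P * U 1 - Q * U 0 := hUrec 0
      have h := hUrec m
      show U (m + 2) = U (m + 1) * U 2 - Q * U m * U 1
      rw [h, h2, hU0, hU1]
      ring
    | more k ih1 ih2 =>
      have h1 : U (m + (k + 2) + 1) = P * U (m + (k + 1) + 1) - Q * U (m + k + 1) :=
        hUrec (m + k + 1)
      have h2 : U (k + 2 + 1) = P * U (k + 1 + 1) - Q * U (k + 1) := hUrec (k + 1)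
      have h3 := hUrec k
      rw [h1, ih1, ih2, h2, h3]
      ring
  have hdvd : ∀ k j : ℕ, U (k + 1) ∣ U ((k + 1) * j) := by
    intro k j
    induction j with
    | zero => simp [hU0]
    | succ j ih =>
      have h : (k + 1) * (j + 1) = (k + 1) * j + k + 1 := by ring
      rw [h, hadd]
      exact dvd_sub (Dvd.intro_left _ rfl) ((ih.mul_left Q).mul_right _)
  refine dvd_antisymm_of_normalize_eq Finset.normalize_lcm Finset.normalize_lcm ?_ ?_
  · refine Finset.lcm_dvd ?_
    intro k hk
    rw [Finset.mem_Icc] at hk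
    obtain ⟨k, rfl⟩ : ∃ l, k = l + 1 := ⟨k - 1, by omega⟩
    refine (hdvd k (n / (k + 1))).trans (Finset.dvd_lcm ?_)
    rw [Finset.mem_Icc]
    refine ⟨?_, Nat.mul_div_le _ _⟩
    have h1 := Nat.div_add_mod n (k + 1)
    have h2 := Nat.mod_lt n (Nat.succ_pos k)
    have h3 : (k + 1) * 1 ≤ (k + 1) * (n / (k + 1)) :=
      Nat.mul_le_mul_left _ (Nat.div_pos hk.2 (Nat.succ_pos k))
    simp only [Nat.succ_eq_add_one] at h2
    generalize (k + 1) * (n / (k + 1)) = a at *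
    omega
  · exact Finset.lcm_mono (Finset.Icc_subset_Icc (by omega) le_rfl)
end
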